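/- Assume the potential outcomes setup and suppose X is c-dependent with Y_x for a given x ∈ {0,1} and c ∈ [0,1]. Then for every τ ∈ (0,1), the τ-th quantile of Y_x satisfies Q_{Y|X}( max{ τ − (c/p_x)·min{τ, 1−τ}, (τ−1)/p_x + 1, 0 } | x ) ≤ Q_{Y_x}(τ) ≤ Q_{Y|X}( min{ τ + (c/p_x)·min{τ, 1−τ}, τ/p_x, 1 } | x ), where the bounds may take the extended values y̲_x or ȳ_x. -/

import Mathlib

open MeasureTheory Set

noncomputable section

/-- `X` is `c`-dependent with the real random variable `V`. -/
def CDep {Ω : Type*} [MeasurableSpace Ω] (P : Measure Ω) (X : Ω → ℕ) (V : Ω → ℝ)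
    (c : ℝ) : Prop :=
  ∃ g : ℝ → ℝ, Measurable g ∧ (∀ v, 0 ≤ g v ∧ g v ≤ 1) ∧
    (∀ A : Set ℝ, MeasurableSet A →
      (P ({ω | X ω = 1} ∩ V ⁻¹' A)).toReal = ∫ v in A, g v ∂(Measure.map V P)) ∧
    (∀ᵐ v ∂(Measure.map V P), |g v - (P {ω | X ω = 1}).toReal| ≤ c)

/-- `P(X = x)`. -/
def px {Ω : Type*} [MeasurableSpace Ω] (P : Measure Ω) (X : Ω → ℕ) (x : ℕ) : ℝ :=
  (P {ω | X ω = x}).toReal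

/-- The conditional cdf `y ↦ P(V ≤ y ∣ X = x)`. -/
def condCDF' {Ω : Type*} [MeasurableSpace Ω] (P : Measure Ω) (X : Ω → ℕ) (V : Ω → ℝ)
    (x : ℕ) (y : ℝ) : ℝ :=
  (P ({ω | V ω ≤ y} ∩ {ω | X ω = x})).toReal / (P {ω | X ω = x}).toReal

/-- The (extended-real-valued) quantile function of a cdf `G`, equal to the left
inverse of `G` on `(0,1)` and extended by the support endpoints `lo` at `0` and
`hi` at `1`. -/
def Qgen (G : ℝ → ℝ) (lo hi : EReal) (τ : ℝ) : EReal :=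
  if τ ≤ 0 then lo else if 1 ≤ τ then hi
  else ((sInf {y : ℝ | τ ≤ G y} : ℝ) : EReal)

/-- The clipped quantile level used in the upper quantile bound. -/
def qUp (p c τ : ℝ) : ℝ := min (min (τ + c / p * min τ (1 - τ)) (τ / p)) 1

/-- The clipped quantile level used in the lower quantile bound. -/
def qLo (p c τ : ℝ) : ℝ := max (max (τ - c / p * min τ (1 - τ)) ((τ - 1) / p + 1)) 0

/-- The `τ`-th quantile of the random variable `V`. -/
def quant {Ω : Type*} [MeasurableSpace Ω] (P : Measure Ω) (V : Ω → ℝ) (τ : ℝ) : ℝ :=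
  sInf {z : ℝ | τ ≤ (P {ω | V ω ≤ z}).toReal}

/-!
Write `F` for the cdf of the potential outcome `V` and `G` for its cdf conditional on `X = x`.
Under `c`-dependence the events `{X = x}` and `{V ≤ y}` have covariance at most
`c * min (F y) (1 - F y)`, and dividing by `p = P (X = x)` gives
`qLo p c (F y) ≤ G y ≤ qUp p c (F y)` for every `y`. Both levels are monotone on `[0, 1]`, and `qUp`
is strictly so below the value `1`; combined with the Galois connection between a cdf and its
quantile function, this turns the pointwise comparison of the cdfs into the comparison of the
quantiles, even if `F` and `G` have jumps or flat pieces.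
-/

open ProbabilityTheory

section Levels

variable {p c s t : ℝ}

lemma qLo_eq_one_sub_qUp (p c t : ℝ) : qLo p c t = 1 - qUp p c (1 - t) := by
  have hcov : 1 - (1 - t + c / p * min (1 - t) (1 - (1 - t))) = t - c / p * min t (1 - t) := by
    rw [sub_sub_cancel, min_comm]
    ring
  have hsub : 1 - (1 - t) / p = (t - 1) / p + 1 := by ring
  rw [qLo, qUp, ← max_sub_sub_left, ← max_sub_sub_left, hcov, hsub, sub_self]

lemma qUp_le_one (p c t : ℝ) : qUp p c t ≤ 1 := min_le_right _ _

lemma add_mul_min_lt_or_one_le {k : ℝ} (hk : 0 ≤ k) (hst : s < t) (ht : t ≤ 1) :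
    s + k * min s (1 - s) < t + k * min t (1 - t) ∨ 1 ≤ t + k * min t (1 - t) := by
  rcases min_choice t (1 - t) with hmin | hmin <;> rw [hmin]
  · left
    have hslope : k * min s (1 - s) ≤ k * t :=
      mul_le_mul_of_nonneg_left ((min_le_left _ _).trans hst.le) hk
    linarith
  rcases lt_or_ge k 1 with hk1 | hk1
  · left
    have hslope : (1 - k) * s < (1 - k) * t := mul_lt_mul_of_pos_left hst (sub_pos.2 hk1)
    have hs : k * min s (1 - s) ≤ k * (1 - s) := mul_le_mul_of_nonneg_left (min_le_right _ _) hk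
    linarith
  · right
    have hle : 1 - t ≤ k * (1 - t) := le_mul_of_one_le_left (sub_nonneg.2 ht) hk1
    linarith

lemma qUp_lt_qUp (hp : 0 < p) (hc : 0 ≤ c) (hst : s < t) (ht : t ≤ 1) (h1 : qUp p c t < 1) :
    qUp p c s < qUp p c t := by
  have hdiv : s / p < t / p := by gcongr
  have ht_eq : qUp p c t = min (t + c / p * min t (1 - t)) (t / p) :=
    min_eq_left ((min_lt_iff.1 h1).resolve_right (lt_irrefl 1)).le
  rw [ht_eq] at h1 ⊢
  refine (min_le_left _ _).trans_lt ?_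
  rcases add_mul_min_lt_or_one_le (div_nonneg hc hp.le) hst ht with hlt | hge
  · exact min_lt_min hlt hdiv
  · rw [min_eq_right_of_lt (((min_lt_iff.1 h1).resolve_left hge.not_gt).trans_le hge)]
    exact (min_le_right _ _).trans_lt hdiv

lemma monotoneOn_qUp (hp : 0 < p) (hc : 0 ≤ c) : MonotoneOn (qUp p c) (Iic 1) := by
  intro s _ t ht hst
  rcases hst.eq_or_lt with rfl | hlt
  · rfl
  rcases lt_or_ge (qUp p c t) 1 with h1 | h1
  · exact (qUp_lt_qUp hp hc hlt ht h1).le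
  · exact (qUp_le_one p c s).trans h1

lemma monotoneOn_qLo (hp : 0 < p) (hc : 0 ≤ c) : MonotoneOn (qLo p c) (Ici 0) := by
  intro s hs t ht hst
  simp only [qLo_eq_one_sub_qUp]
  gcongr ?_ - ?_
  exact monotoneOn_qUp hp hc (sub_le_self (1 : ℝ) ht) (sub_le_self (1 : ℝ) hs) (by gcongr)

lemma qUp_pos (hp : 0 < p) (hc : 0 ≤ c) (h0 : 0 < t) (h1 : t ≤ 1) : 0 < qUp p c t := by
  have hmin : 0 ≤ min t (1 - t) := le_min h0.le (sub_nonneg.2 h1)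
  exact lt_min (lt_min (add_pos_of_pos_of_nonneg h0 (mul_nonneg (div_nonneg hc hp.le) hmin))
    (div_pos h0 hp)) one_pos

lemma qLo_lt_one (hp : 0 < p) (hc : 0 ≤ c) (h0 : 0 ≤ t) (h1 : t < 1) : qLo p c t < 1 := by
  rw [qLo_eq_one_sub_qUp]
  exact sub_lt_self 1 (qUp_pos hp hc (sub_pos.2 h1) (sub_le_self 1 h0))

end Levels

section EventCov

variable {Ω : Type*} [MeasurableSpace Ω] {P : Measure Ω} {S B : Set Ω} {c : ℝ}

/-- The covariance of the indicators of the events `S` and `B`: the quantity through which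
`c`-dependence enters the quantile bounds. -/
def eventCov (P : Measure Ω) (S B : Set Ω) : ℝ :=
  P.real (S ∩ B) - P.real S * P.real B

lemma eventCov_comm (P : Measure Ω) (S B : Set Ω) : eventCov P S B = eventCov P B S := by
  rw [eventCov, eventCov, inter_comm, mul_comm]

lemma cond_real_eq_div (P : Measure Ω) (hS : MeasurableSet S) (B : Set Ω) :
    P[|S].real B = P.real (S ∩ B) / P.real S := by
  rw [measureReal_def, cond_apply hS, ENNReal.toReal_mul, ENNReal.toReal_inv, inv_mul_eq_div]
  rfl

lemma cond_real_le_qUp [IsFiniteMeasure P] (hS : MeasurableSet S) (hS0 : 0 < P.real S)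
    (h : |eventCov P S B| ≤ c * min (P.real B) (1 - P.real B)) :
    P[|S].real B ≤ qUp (P.real S) c (P.real B) := by
  rw [cond_real_eq_div P hS, qUp]
  have hcov : P.real (S ∩ B) - P.real S * P.real B ≤ c * min (P.real B) (1 - P.real B) :=
    (le_abs_self _).trans h
  refine le_min (le_min ?_ ?_) (div_le_one_of_le₀ (measureReal_mono inter_subset_left) hS0.le)
  · rw [div_le_iff₀ hS0, add_mul, mul_right_comm, div_mul_cancel₀ c hS0.ne']
    linarith
  · exact div_le_div_of_nonneg_right (measureReal_mono inter_subset_right) hS0.le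

variable [IsProbabilityMeasure P]

lemma eventCov_compl_right (S : Set Ω) (hB : MeasurableSet B) :
    eventCov P S Bᶜ = -eventCov P S B := by
  have hsplit : P.real (S ∩ B) + P.real (S ∩ Bᶜ) = P.real S := measureReal_inter_add_sdiff hB
  rw [eventCov, eventCov, probReal_compl_eq_one_sub hB, ← hsplit]
  ring

lemma eventCov_compl_left (hS : MeasurableSet S) (B : Set Ω) :
    eventCov P Sᶜ B = -eventCov P S B := by
  rw [eventCov_comm, eventCov_compl_right B hS, eventCov_comm]

lemma qLo_le_cond_real (hS : MeasurableSet S) (hS0 : 0 < P.real S) (hB : MeasurableSet B)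
    (h : |eventCov P S B| ≤ c * min (P.real B) (1 - P.real B)) :
    qLo (P.real S) c (P.real B) ≤ P[|S].real B := by
  have : IsProbabilityMeasure P[|S] :=
    cond_isProbabilityMeasure ((measureReal_ne_zero_iff (by finiteness)).1 hS0.ne')
  have hcompl : P[|S].real Bᶜ ≤ qUp (P.real S) c (P.real Bᶜ) := by
    refine cond_real_le_qUp hS hS0 ?_
    rwa [eventCov_compl_right S hB, abs_neg, probReal_compl_eq_one_sub hB, sub_sub_cancel, min_comm]
  rw [probReal_compl_eq_one_sub hB, probReal_compl_eq_one_sub hB] at hcompl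
  rw [qLo_eq_one_sub_qUp]
  linarith

end EventCov

section Quantile

variable {t y : ℝ} {lo hi : EReal}

lemma csInf_le_iff_le_cdf (μ : Measure ℝ) (h0 : 0 < t) (h1 : t < 1) :
    sInf {z | t ≤ cdf μ z} ≤ y ↔ t ≤ cdf μ y := by
  have hbdd : BddBelow {z | t ≤ cdf μ z} := by
    obtain ⟨b, hb⟩ := ((tendsto_cdf_atBot μ).eventually (gt_mem_nhds h0)).exists
    exact ⟨b, fun z hz ↦ ((monotone_cdf μ).reflect_lt (hb.trans_le hz)).le⟩
  have hne : {z | t ≤ cdf μ z}.Nonempty :=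
    ((tendsto_cdf_atTop μ).eventually (lt_mem_nhds h1)).exists.imp fun _ ↦ le_of_lt
  refine ⟨fun h ↦ ?_, csInf_le hbdd⟩
  rw [← (cdf μ).iInf_Ioi_eq y]
  refine le_ciInf fun z ↦ ?_
  obtain ⟨s, hs, hsz⟩ := exists_lt_of_csInf_lt hne (h.trans_lt z.2)
  exact hs.trans (monotone_cdf μ hsz.le)

lemma Qgen_cdf_le (μ : Measure ℝ) (ht : t < 1) (hlo : lo ≤ y) (h : t ≤ cdf μ y) :
    Qgen (cdf μ) lo hi t ≤ y := by
  rw [Qgen]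
  split_ifs with h0 h1
  · exact hlo
  · exact absurd ht h1.not_gt
  · exact EReal.coe_le_coe_iff.2 ((csInf_le_iff_le_cdf μ (not_le.1 h0) ht).2 h)

lemma le_Qgen_cdf (μ : Measure ℝ) (ht : 0 < t) (hhi : y ≤ hi)
    (h : t < 1 → ∀ z < y, cdf μ z < t) : y ≤ Qgen (cdf μ) lo hi t := by
  rw [Qgen]
  split_ifs with h0 h1
  · exact absurd ht h0.not_gt
  · exact hhi
  · refine EReal.coe_le_coe_iff.2 (le_of_not_gt fun hlt ↦ ?_)
    exact (h (not_le.1 h1) _ hlt).not_ge ((csInf_le_iff_le_cdf μ ht (not_le.1 h1)).1 le_rfl)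

variable {Ω : Type*} [MeasurableSpace Ω] {P : Measure Ω} [IsProbabilityMeasure P] {V : Ω → ℝ}

lemma cdf_map_apply (hV : Measurable V) (y : ℝ) : cdf (P.map V) y = P.real {ω | V ω ≤ y} := by
  have := Measure.isProbabilityMeasure_map (μ := P) hV.aemeasurable
  rw [cdf_eq_real, map_measureReal_apply hV measurableSet_Iic]
  rfl

lemma quant_le_iff (hV : Measurable V) (h0 : 0 < t) (h1 : t < 1) :
    quant P V t ≤ y ↔ t ≤ P.real {ω | V ω ≤ y} := by
  rw [← cdf_map_apply (P := P) hV, ← csInf_le_iff_le_cdf _ h0 h1]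
  simp only [cdf_map_apply (P := P) hV]
  rfl

lemma le_quant_of_forall_lt (hV : Measurable V) (h0 : 0 < t) (h1 : t < 1)
    (hlo : ∀ y : ℝ, y < lo → P.real {ω | V ω ≤ y} = 0) : lo ≤ quant P V t := by
  by_contra! hlt
  have hle : t ≤ P.real {ω | V ω ≤ quant P V t} := (quant_le_iff hV h0 h1).1 le_rfl
  exact (hle.trans_eq (hlo _ hlt)).not_gt h0

lemma quant_le_of_forall_ge (hV : Measurable V) (h0 : 0 < t) (h1 : t < 1)
    (hhi : ∀ y : ℝ, hi ≤ y → P.real {ω | V ω ≤ y} = 1) : quant P V t ≤ hi := by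
  by_contra! hlt
  obtain ⟨y, hy, hyq⟩ := EReal.lt_iff_exists_real_btwn.1 hlt
  have hle := (quant_le_iff hV h0 h1).2 (h1.le.trans_eq (hhi y hy.le).symm)
  exact (EReal.coe_lt_coe_iff.1 hyq).not_ge hle

end Quantile

section PotentialOutcome

lemma measurableSet_setOf_eq {Ω α : Type*} [MeasurableSpace Ω] [MeasurableSpace α]
    [MeasurableSingletonClass α] {X : Ω → α} (hX : Measurable X) (x : α) :
    MeasurableSet {ω | X ω = x} :=
  hX (measurableSet_singleton x)

lemma setOf_eq_zero_eq_compl_setOf_eq_one {Ω : Type*} {X : Ω → ℕ} (hX01 : ∀ ω, X ω ≤ 1) :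
    {ω | X ω = 0} = {ω | X ω = 1}ᶜ := by
  ext ω
  have := hX01 ω
  simp only [mem_ofPred_eq, mem_compl_iff]
  omega

variable {Ω : Type*} [MeasurableSpace Ω] {P : Measure Ω} {X : Ω → ℕ} {V Y : Ω → ℝ}
  {x : ℕ} {c : ℝ}

lemma condCDF'_congr (hY : ∀ ω, X ω = x → Y ω = V ω) : condCDF' P X Y x = condCDF' P X V x := by
  have hset (y : ℝ) : {ω | Y ω ≤ y} ∩ {ω | X ω = x} = {ω | V ω ≤ y} ∩ {ω | X ω = x} := by
    ext ω
    exact and_congr_left fun hω ↦ by rw [mem_ofPred_eq, mem_ofPred_eq, hY ω hω]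
  ext y
  rw [condCDF', condCDF', hset]

lemma condCDF'_eq_cond_real (hX : Measurable X) (y : ℝ) :
    condCDF' P X V x y = P[|{ω | X ω = x}].real {ω | V ω ≤ y} := by
  rw [cond_real_eq_div P (measurableSet_setOf_eq hX x), inter_comm]
  rfl

lemma condCDF'_eq_cdf [IsFiniteMeasure P] (hV : Measurable V) (hX : Measurable X)
    (hpx : 0 < px P X x) :
    condCDF' P X V x = cdf (P[|{ω | X ω = x}].map V) := by
  have : IsProbabilityMeasure P[|{ω | X ω = x}] :=
    cond_isProbabilityMeasure ((measureReal_ne_zero_iff (by finiteness)).1 hpx.ne')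
  ext y
  rw [cdf_map_apply hV, condCDF'_eq_cond_real hX]

variable [IsProbabilityMeasure P]

lemma px_zero_eq (hX : Measurable X) (hX01 : ∀ ω, X ω ≤ 1) : px P X 0 = 1 - px P X 1 := by
  rw [px, setOf_eq_zero_eq_compl_setOf_eq_one hX01]
  exact probReal_compl_eq_one_sub (measurableSet_setOf_eq hX 1)

lemma px_pos (hX : Measurable X) (hX01 : ∀ ω, X ω ≤ 1) (hp1 : px P X 1 ∈ Ioo 0 1) (hx : x ≤ 1) :
    0 < px P X x := by
  interval_cases x
  · rw [px_zero_eq hX hX01]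
    exact sub_pos.2 hp1.2
  · exact hp1.1

lemma real_setOf_le_eq_of_condCDF'_eq {y r : ℝ} (hX : Measurable X) (hX01 : ∀ ω, X ω ≤ 1)
    (hp1 : px P X 1 ∈ Ioo 0 1) (h : ∀ x ≤ 1, condCDF' P X V x y = r) :
    P.real {ω | V ω ≤ y} = r := by
  have hjoint (x : ℕ) (hx : x ≤ 1) : P.real ({ω | V ω ≤ y} ∩ {ω | X ω = x}) = r * px P X x :=
    (div_eq_iff (px_pos hX hX01 hp1 hx).ne').1 (h x hx)
  rw [← measureReal_inter_add_sdiff (measurableSet_setOf_eq hX 1), sdiff_eq,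
    ← setOf_eq_zero_eq_compl_setOf_eq_one hX01, hjoint 1 le_rfl, hjoint 0 zero_le_one,
    px_zero_eq hX hX01]
  ring

lemma CDep.abs_eventCov_one_le (hdep : CDep P X V c) (hV : Measurable V) {A : Set ℝ}
    (hA : MeasurableSet A) : |eventCov P {ω | X ω = 1} (V ⁻¹' A)| ≤ c * P.real (V ⁻¹' A) := by
  obtain ⟨g, hg, hg01, hgA, hgc⟩ := hdep
  have := Measure.isProbabilityMeasure_map (μ := P) hV.aemeasurable
  have hgi : Integrable g (P.map V) := .of_bound hg.aestronglyMeasurable 1 <|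
    .of_forall fun v ↦ (Real.norm_of_nonneg (hg01 v).1).trans_le (hg01 v).2
  have hcov : eventCov P {ω | X ω = 1} (V ⁻¹' A) =
      ∫ v in A, (g v - P.real {ω | X ω = 1}) ∂(P.map V) := by
    rw [integral_sub hgi.integrableOn (integrable_const _), ← hgA A hA, setIntegral_const,
      map_measureReal_apply hV hA, smul_eq_mul, mul_comm]
    rfl
  rw [hcov, ← map_measureReal_apply hV hA, ← Real.norm_eq_abs]
  refine norm_setIntegral_le_of_norm_le_const_ae' (measure_lt_top _ _) ?_
  filter_upwards [hgc] with v hv _ using hv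

lemma CDep.abs_eventCov_le (hdep : CDep P X V c) (hV : Measurable V) (hX : Measurable X)
    (hX01 : ∀ ω, X ω ≤ 1) (hx : x ≤ 1) {A : Set ℝ} (hA : MeasurableSet A) :
    |eventCov P {ω | X ω = x} (V ⁻¹' A)| ≤ c * P.real (V ⁻¹' A) := by
  interval_cases x
  · rw [setOf_eq_zero_eq_compl_setOf_eq_one hX01,
      eventCov_compl_left (measurableSet_setOf_eq hX 1), abs_neg]
    exact hdep.abs_eventCov_one_le hV hA
  · exact hdep.abs_eventCov_one_le hV hA

lemma CDep.abs_eventCov_le_min (hdep : CDep P X V c) (hV : Measurable V) (hX : Measurable X)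
    (hX01 : ∀ ω, X ω ≤ 1) (hx : x ≤ 1) {A : Set ℝ} (hA : MeasurableSet A) :
    |eventCov P {ω | X ω = x} (V ⁻¹' A)| ≤ c * min (P.real (V ⁻¹' A)) (1 - P.real (V ⁻¹' A)) := by
  have hcompl := hdep.abs_eventCov_le hV hX hX01 hx hA.compl
  rw [preimage_compl, eventCov_compl_right _ (hV hA), abs_neg,
    probReal_compl_eq_one_sub (hV hA)] at hcompl
  rcases min_choice (P.real (V ⁻¹' A)) (1 - P.real (V ⁻¹' A)) with hmin | hmin <;> rw [hmin]
  · exact hdep.abs_eventCov_le hV hX hX01 hx hA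
  · exact hcompl

lemma CDep.condCDF'_mem_Icc (hdep : CDep P X V c) (hV : Measurable V) (hX : Measurable X)
    (hX01 : ∀ ω, X ω ≤ 1) (hx : x ≤ 1) (hpx : 0 < px P X x) (y : ℝ) :
    condCDF' P X V x y ∈ Icc (qLo (px P X x) c (P.real {ω | V ω ≤ y}))
      (qUp (px P X x) c (P.real {ω | V ω ≤ y})) := by
  have hcov := hdep.abs_eventCov_le_min hV hX hX01 hx (measurableSet_Iic (a := y))
  have hS : MeasurableSet {ω | X ω = x} := measurableSet_setOf_eq hX x
  rw [condCDF'_eq_cond_real hX]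
  exact ⟨qLo_le_cond_real hS hpx (hV measurableSet_Iic) hcov, cond_real_le_qUp hS hpx hcov⟩

theorem potential_outcome_quantile_bounds_general (hV : Measurable V) (hX : Measurable X)
    (hX01 : ∀ ω, X ω ≤ 1) (hx : x ≤ 1) (hpx : 0 < px P X x) (hY : ∀ ω, X ω = x → Y ω = V ω)
    {lo hi : EReal} (hlo : ∀ y : ℝ, y < lo → P.real {ω | V ω ≤ y} = 0)
    (hhi : ∀ y : ℝ, hi ≤ y → P.real {ω | V ω ≤ y} = 1)
    (hc : 0 ≤ c) (hdep : CDep P X V c) {τ : ℝ} (h0 : 0 < τ) (h1 : τ < 1) :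
    Qgen (condCDF' P X Y x) lo hi (qLo (px P X x) c τ) ≤ quant P V τ ∧
      quant P V τ ≤ Qgen (condCDF' P X Y x) lo hi (qUp (px P X x) c τ) := by
  have hG := hdep.condCDF'_mem_Icc hV hX hX01 hx hpx
  rw [condCDF'_congr hY]
  rw [condCDF'_eq_cdf hV hX hpx] at hG ⊢
  constructor
  · refine Qgen_cdf_le _ (qLo_lt_one hpx hc h0.le h1) (le_quant_of_forall_lt hV h0 h1 hlo) ?_
    have hτ : τ ≤ P.real {ω | V ω ≤ quant P V τ} := (quant_le_iff hV h0 h1).1 le_rfl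
    exact (monotoneOn_qLo hpx hc h0.le measureReal_nonneg hτ).trans (hG _).1
  · refine le_Qgen_cdf _ (qUp_pos hpx hc h0 h1.le) (quant_le_of_forall_ge hV h0 h1 hhi) ?_
    intro hlt y hy
    have hτ : P.real {ω | V ω ≤ y} < τ := lt_of_not_ge (mt (quant_le_iff hV h0 h1).2 hy.not_ge)
    exact (hG y).2.trans_lt (qUp_lt_qUp hpx hc hτ h1.le hlt)

end PotentialOutcome

/-- Bounds on the quantiles of the potential outcome `Y_x` under `c`-dependence:
for `τ ∈ (0,1)`,
`Q_{Y|X}(max{τ - (c/p_x)min{τ,1-τ}, (τ-1)/p_x + 1, 0} | x) ≤ Q_{Y_x}(τ)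
  ≤ Q_{Y|X}(min{τ + (c/p_x)min{τ,1-τ}, τ/p_x, 1} | x)`,
where the bounds may take the extended values `y̲_x` or `ȳ_x`. -/
theorem potential_outcome_quantile_bounds {Ω : Type*} [MeasurableSpace Ω]
    (P : Measure Ω) [IsProbabilityMeasure P]
    (Yv : ℕ → Ω → ℝ) (X : Ω → ℕ) (Y : Ω → ℝ)
    (hYm : ∀ x, Measurable (Yv x)) (hXm : Measurable X)
    (hX01 : ∀ ω, X ω ≤ 1)
    (hY : ∀ ω, Y ω = Yv (X ω) ω)
    (hp1 : px P X 1 ∈ Set.Ioo (0:ℝ) 1)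
    (lo hi : ℕ → EReal) (hlh : ∀ x ≤ 1, lo x < hi x)
    (hcont : ∀ x ≤ 1, ∀ x' ≤ 1, Continuous (condCDF' P X (Yv x) x'))
    (hmono : ∀ x ≤ 1, ∀ x' ≤ 1, StrictMonoOn (condCDF' P X (Yv x) x')
      {y : ℝ | lo x ≤ (y : EReal) ∧ (y : EReal) ≤ hi x})
    (hsupp : ∀ x ≤ 1, ∀ x' ≤ 1, ∀ y : ℝ,
      ((y : EReal) ≤ lo x → condCDF' P X (Yv x) x' y = 0) ∧
      (hi x ≤ (y : EReal) → condCDF' P X (Yv x) x' y = 1))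
    (x : ℕ) (hx : x ≤ 1) (c : ℝ) (hc : c ∈ Set.Icc (0:ℝ) 1)
    (hdep : CDep P X (Yv x) c) :
    ∀ τ : ℝ, 0 < τ → τ < 1 →
      Qgen (condCDF' P X Y x) (lo x) (hi x) (qLo (px P X x) c τ) ≤
        ((quant P (Yv x) τ : ℝ) : EReal) ∧
      ((quant P (Yv x) τ : ℝ) : EReal) ≤
        Qgen (condCDF' P X Y x) (lo x) (hi x) (qUp (px P X x) c τ) := by
  have htotal {y r : ℝ} : (∀ x' ≤ 1, condCDF' P X (Yv x) x' y = r) → P.real {ω | Yv x ω ≤ y} = r :=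
    real_setOf_le_eq_of_condCDF'_eq hXm hX01 hp1
  intro τ h0 h1
  exact potential_outcome_quantile_bounds_general (hYm x) hXm hX01 hx (px_pos hXm hX01 hp1 hx)
    (fun ω hω ↦ hω ▸ hY ω) (fun y hy ↦ htotal fun x' hx' ↦ (hsupp x hx x' hx' y).1 hy.le)
    (fun y hy ↦ htotal fun x' hx' ↦ (hsupp x hx x' hx' y).2 hy) hc.1 hdep h0 h1
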